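/- Let k, n be natural numbers with k ≥ 15 and n ≥ k + 20, and let s, t be natural numbers with s + t = k - 6 and 1 ≤ s ≤ t + 2. Let Q(s,t) denote the 7×7 matrix [[0,-1,1,-2,t,s,u],[-1,0,-1,2,t,-s,u],[1,-1,0,-2,-t,s,u],[-1,1,-1,1,t,s,u],[1,1,-1,2,t-1,s,u],[1,-1,1,2,t,s-1,u],[1,1,1,2,t,s,u-1]] with u = n - k + 1 (entries viewed as reals). Then the largest real root of det(λI - Q(s-1, t+1)) is strictly greater than the largest real root of det(λI - Q(s,t)). -/

import Mathlib

/-- The 7×7 equitable quotient matrix `Q(s,t)` with real parameters. -/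
def Q1 (s t u : ℝ) : Matrix (Fin 7) (Fin 7) ℝ :=
  !![0, -1, 1, -2, t, s, u;
     -1, 0, -1, 2, t, -s, u;
     1, -1, 0, -2, -t, s, u;
     -1, 1, -1, 1, t, s, u;
     1, 1, -1, 2, t - 1, s, u;
     1, -1, 1, 2, t, s - 1, u;
     1, 1, 1, 2, t, s, u - 1]

/-!
`Q(s, t) + I` is a symmetric sign matrix times the diagonal matrix of class sizes, so `Q(s, t)` has
the spectrum of a symmetric matrix. The last four classes form an all-positive clique on
`s + t + u + 2` vertices, and a Rayleigh quotient on it shows that the index `b` of `Q(s, t)` is at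
least `s + t + u + 1`. With `y = x + 1`, moving a vertex from the class of size `s` to the one of
size `t` lowers the characteristic polynomial by
`8 (y ^ 2 - 2 u) ((t + 2 - s) (y ^ 2 - 8) + 8)`, which is positive for `y ≥ u + 3`. Hence the
characteristic polynomial of `Q(s - 1, t + 1)` is negative at `b`, and it has a root beyond `b`.
-/

open Matrix

lemma det_fromBlocks_mul_right {m n R : Type*} [Fintype m] [Fintype n] [DecidableEq m]
    [DecidableEq n] [CommRing R] (A : Matrix m m R) (X : Matrix m n R) (C : Matrix n m R)
    (D : Matrix n n R) : (fromBlocks A (A * X) C D).det = A.det * (D - C * X).det := by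
  have hfactor : fromBlocks A (A * X) C D = fromBlocks A 0 C (D - C * X) * fromBlocks 1 X 0 1 := by
    simp [fromBlocks_multiply]
  rw [hfactor, det_mul, det_fromBlocks_zero₁₂, det_fromBlocks_zero₂₁, det_one, det_one, one_mul,
    mul_one]

section Spectrum

variable {ι : Type*} [Fintype ι] [DecidableEq ι]

lemma det_smul_one_sub_eq_eval_charpoly {R : Type*} [CommRing R] (A : Matrix ι ι R) (x : R) :
    (x • (1 : Matrix ι ι R) - A).det = A.charpoly.eval x := by
  rw [eval_charpoly, scalar_apply, smul_one_eq_diagonal]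

lemma setOf_det_smul_one_sub_eq_zero {K : Type*} [Field K] (A : Matrix ι ι K) :
    {x : K | (x • (1 : Matrix ι ι K) - A).det = 0} = spectrum K A := by
  ext x
  rw [Set.mem_ofPred_eq, det_smul_one_sub_eq_eval_charpoly, mem_spectrum_iff_isRoot_charpoly,
    Polynomial.IsRoot.def]

lemma exists_mem_spectrum_gt_of_det_neg {A : Matrix ι ι ℝ} {c : ℝ}
    (hc : (c • (1 : Matrix ι ι ℝ) - A).det < 0) : ∃ μ ∈ spectrum ℝ A, c < μ := by
  contrapose! hc
  rw [det_smul_one_sub_eq_eval_charpoly]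
  refine Polynomial.zero_le_eval_of_roots_le_of_leadingCoeff_nonneg
    (fun μ hμ ↦ hc μ (mem_spectrum_iff_isRoot_charpoly.mpr hμ)) ?_
  simp [A.charpoly_monic.leadingCoeff]

open scoped ComplexOrder in
lemma exists_mem_spectrum_ge_of_mul_le_dotProduct_mulVec {𝕜 : Type*} [RCLike 𝕜]
    {A : Matrix ι ι 𝕜} (hA : A.IsHermitian) {v : ι → 𝕜} (hv : v ≠ 0) {c : ℝ}
    (hc : c * RCLike.re (star v ⬝ᵥ v) ≤ RCLike.re (star v ⬝ᵥ A *ᵥ v)) :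
    ∃ μ ∈ spectrum ℝ A, c ≤ μ := by
  by_contra! hlt
  have hM : (algebraMap ℝ (Matrix ι ι 𝕜) c - A).IsHermitian :=
    (IsSelfAdjoint.algebraMap _ (IsSelfAdjoint.all c)).sub hA
  have hpos : (algebraMap ℝ (Matrix ι ι 𝕜) c - A).PosDef := by
    rw [hM.posDef_iff_eigenvalues_pos]
    intro i
    have hi := hM.eigenvalues_mem_spectrum_real i
    rw [← spectrum.singleton_sub_eq, Set.singleton_sub] at hi
    obtain ⟨μ, hμ, hμi⟩ := hi
    rw [← hμi]
    exact sub_pos.mpr (hlt μ hμ)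
  have hquad := hpos.re_dotProduct_pos hv
  rw [sub_mulVec, dotProduct_sub, Algebra.algebraMap_eq_smul_one, smul_mulVec,
    one_mulVec, dotProduct_smul, map_sub, RCLike.smul_re] at hquad
  linarith

lemma spectrum_mul_diagonal_eq_sqrt_mul_mul_sqrt {d : ι → ℝ} (hd : ∀ i, 0 ≤ d i)
    (S : Matrix ι ι ℝ) :
    spectrum ℝ (S * diagonal d) =
      spectrum ℝ (diagonal (fun i ↦ √(d i)) * S * diagonal fun i ↦ √(d i)) := by
  have hsq : diagonal d = diagonal (fun i ↦ √(d i)) * diagonal fun i ↦ √(d i) := by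
    simp [diagonal_mul_diagonal, Real.mul_self_sqrt (hd _)]
  ext μ
  rw [mem_spectrum_iff_isRoot_charpoly, mem_spectrum_iff_isRoot_charpoly, hsq, ← mul_assoc,
    charpoly_mul_comm, ← mul_assoc]

lemma exists_mem_spectrum_mul_diagonal_ge_sum {S : Matrix ι ι ℝ} (hS : S.IsHermitian)
    {d : ι → ℝ} (hd : ∀ i, 0 ≤ d i) {C : Finset ι} (hC : ∀ i ∈ C, ∀ j ∈ C, 1 ≤ S i j)
    (hpos : 0 < ∑ i ∈ C, d i) :
    ∃ μ ∈ spectrum ℝ (S * diagonal d), ∑ i ∈ C, d i ≤ μ := by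
  rw [spectrum_mul_diagonal_eq_sqrt_mul_mul_sqrt hd]
  set r : ι → ℝ := fun i ↦ √(d i)
  set v : ι → ℝ := fun i ↦ if i ∈ C then r i else 0 with hvdef
  have hr (i : ι) : r i * r i = d i := Real.mul_self_sqrt (hd i)
  have hvv : v ⬝ᵥ v = ∑ i ∈ C, d i := by
    simp [dotProduct, hvdef, hr]
  have hv : v ≠ 0 := by
    rintro h
    simp [← hvv, h] at hpos
  have hH : (diagonal r * S * diagonal r).IsHermitian := by
    simpa using isHermitian_conjTranspose_mul_mul (diagonal r) hS
  refine exists_mem_spectrum_ge_of_mul_le_dotProduct_mulVec hH hv ?_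
  rw [star_trivial, RCLike.re_to_real, RCLike.re_to_real]
  calc (∑ i ∈ C, d i) * (v ⬝ᵥ v) = ∑ i ∈ C, ∑ j ∈ C, d i * d j := by
        rw [hvv, Finset.sum_mul_sum]
    _ ≤ ∑ i ∈ C, ∑ j ∈ C, d i * d j * S i j :=
        Finset.sum_le_sum fun i hi ↦ Finset.sum_le_sum fun j hj ↦
          le_mul_of_one_le_right (mul_nonneg (hd i) (hd j)) (hC i hi j hj)
    _ = ∑ i ∈ C, ∑ j ∈ C, r i * (r i * S i j * r j * r j) := by
        refine Finset.sum_congr rfl fun i _ ↦ Finset.sum_congr rfl fun j _ ↦ ?_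
        rw [← hr i, ← hr j]
        ring
    _ = v ⬝ᵥ (diagonal r * S * diagonal r) *ᵥ v := by
        simp [dotProduct, mulVec, hvdef, Finset.mul_sum]

end Spectrum

/-- The symmetric `±1` matrix of the signs between the seven classes of the equitable partition
behind `Q1`; a diagonal entry is the sign inside the class, and `1` for a single vertex. -/
def signMatrix : Matrix (Fin 7) (Fin 7) ℝ :=
  !![1, -1, 1, -1, 1, 1, 1;
     -1, 1, -1, 1, 1, -1, 1;
     1, -1, 1, -1, -1, 1, 1;
     -1, 1, -1, 1, 1, 1, 1;
     1, 1, -1, 1, 1, 1, 1;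
     1, -1, 1, 1, 1, 1, 1;
     1, 1, 1, 1, 1, 1, 1]

/-- The sizes of the seven classes of the equitable partition behind `Q1`, as real numbers. -/
def classSize (s t u : ℝ) : Fin 7 → ℝ :=
  ![1, 1, 1, 2, t, s, u]

lemma signMatrix_isHermitian : signMatrix.IsHermitian := by
  ext i j
  fin_cases i <;> fin_cases j <;> simp [signMatrix]

lemma Q1_eq_signMatrix_mul_diagonal_sub_one (s t u : ℝ) :
    Q1 s t u = signMatrix * diagonal (classSize s t u) - 1 := by
  ext i j
  rw [Matrix.sub_apply, mul_diagonal]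
  fin_cases i <;> fin_cases j <;> norm_num [Q1, signMatrix, classSize]

lemma exists_mem_spectrum_Q1_ge {s t u : ℝ} (hs : 0 ≤ s) (ht : 0 ≤ t) (hu : 0 ≤ u) :
    ∃ μ ∈ spectrum ℝ (Q1 s t u), s + t + u + 1 ≤ μ := by
  have hsize (i : Fin 7) : 0 ≤ classSize s t u i := by
    fin_cases i <;> simp [classSize, hs, ht, hu]
  have hclique : ∀ i ∈ Finset.Ici (3 : Fin 7), ∀ j ∈ Finset.Ici (3 : Fin 7),
      1 ≤ signMatrix i j := by
    intro i hi j hj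
    fin_cases i <;> fin_cases j <;> simp_all [signMatrix]
  have hsum : ∑ i ∈ Finset.Ici (3 : Fin 7), classSize s t u i = s + t + u + 2 := by
    rw [show Finset.Ici (3 : Fin 7) = {3, 4, 5, 6} from rfl]
    simp [classSize]
    ring
  obtain ⟨μ, hμ, hle⟩ := exists_mem_spectrum_mul_diagonal_ge_sum signMatrix_isHermitian hsize
    hclique (by linarith)
  refine ⟨μ - 1, ?_, by linarith⟩
  rw [Q1_eq_signMatrix_mul_diagonal_sub_one, ← map_one (algebraMap ℝ (Matrix (Fin 7) (Fin 7) ℝ)),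
    ← spectrum.sub_singleton_eq]
  exact Set.sub_mem_sub hμ rfl

lemma det_smul_one_sub_signMatrix_mul_diagonal (s t u y : ℝ) :
    (y • (1 : Matrix (Fin 7) (Fin 7) ℝ) - signMatrix * diagonal (classSize s t u)).det =
      4 * !![4 - 2 * y, y ^ 2 / 2 - y * t, y ^ 2 / 2 - y - y * s, -(y * u);
             -4, -2 * t, y - y ^ 2 / 2, y ^ 2 / 2 - 2 * u;
             4, 2 * t - y ^ 2 / 2, -y, y ^ 2 / 2;
             y - 4, -2 * t, y - 2 * s, -2 * u].det := by
  set M := y • (1 : Matrix (Fin 7) (Fin 7) ℝ) - signMatrix * diagonal (classSize s t u) with hM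
  -- Moving the last three rows to the top makes the leading block `A` constant and invertible.
  let A : Matrix (Fin 3) (Fin 3) ℝ := !![-1, -1, 1; -1, 1, -1; -1, -1, -1]
  let X : Matrix (Fin 3) (Fin 4) ℝ :=
    !![2, t - y / 2, s - y / 2, u; 0, 0, y / 2, -y / 2; 0, y / 2, 0, -y / 2]
  let C : Matrix (Fin 4) (Fin 3) ℝ := !![y - 1, 1, -1; 1, y - 1, 1; -1, 1, y - 1; 1, -1, 1]
  let D : Matrix (Fin 4) (Fin 4) ℝ :=
    !![2, -t, -s, -u; -2, -t, s, -u; 2, t, -s, -u; y - 2, -t, -s, -u]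
  let e : Fin 3 ⊕ Fin 4 ≃ Fin 7 := finSumFinEquiv
  have hrow : ∀ i, e i + 4 = Sum.elim ![4, 5, 6] ![0, 1, 2, 3] i := by decide
  have hcol : ∀ j, e j = Sum.elim ![0, 1, 2] ![3, 4, 5, 6] j := by decide
  have hA : A.det = 4 := by
    simp [A, det_fin_three]
    norm_num
  have hblocks : M.submatrix (fun i ↦ e i + 4) e = fromBlocks A (A * X) C D := by
    ext i j
    rw [submatrix_apply, hrow, hcol, hM, Matrix.sub_apply, Matrix.smul_apply, smul_eq_mul,
      mul_diagonal]
    rcases i with i | i <;> rcases j with j | j <;> fin_cases i <;> fin_cases j <;>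
      simp [A, X, C, D, signMatrix, classSize, one_apply] <;> ring
  have hsign : (Equiv.addRight (4 : Fin 7)).sign = 1 := by decide
  have hdet : M.det = (M.submatrix (fun i ↦ e i + 4) e).det := by
    have hperm := det_permute (Equiv.addRight (4 : Fin 7)) M
    rw [hsign, Units.val_one, Int.cast_one, one_mul] at hperm
    rw [← hperm, ← det_submatrix_equiv_self e, submatrix_submatrix]
    rfl
  rw [hdet, hblocks, det_fromBlocks_mul_right, hA]
  congr 2
  ext i j
  fin_cases i <;> fin_cases j <;> simp [C, D, X] <;> ring

lemma det_smul_one_sub_Q1_sub_shift (s t u x : ℝ) :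
    (x • (1 : Matrix (Fin 7) (Fin 7) ℝ) - Q1 s t u).det -
        (x • (1 : Matrix (Fin 7) (Fin 7) ℝ) - Q1 (s - 1) (t + 1) u).det =
      8 * ((x + 1) ^ 2 - 2 * u) * ((t + 2 - s) * ((x + 1) ^ 2 - 8) + 8) := by
  have hshift (s t : ℝ) : x • (1 : Matrix (Fin 7) (Fin 7) ℝ) - Q1 s t u =
      (x + 1) • (1 : Matrix (Fin 7) (Fin 7) ℝ) - signMatrix * diagonal (classSize s t u) := by
    rw [Q1_eq_signMatrix_mul_diagonal_sub_one, add_smul, one_smul]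
    abel
  rw [hshift, hshift, det_smul_one_sub_signMatrix_mul_diagonal,
    det_smul_one_sub_signMatrix_mul_diagonal]
  simp [det_succ_row_zero, Fin.sum_univ_succ, Fin.succAbove]
  ring

lemma det_smul_one_sub_Q1_shift_lt {s t u x : ℝ} (hst : s ≤ t + 2) (hu : 0 ≤ u) (hx : u + 2 ≤ x) :
    (x • (1 : Matrix (Fin 7) (Fin 7) ℝ) - Q1 (s - 1) (t + 1) u).det <
      (x • (1 : Matrix (Fin 7) (Fin 7) ℝ) - Q1 s t u).det := by
  rw [← sub_pos, det_smul_one_sub_Q1_sub_shift]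
  have h8 : 0 ≤ (x + 1) ^ 2 - 8 := by nlinarith
  have hu2 : 0 < (x + 1) ^ 2 - 2 * u := by nlinarith
  have hgap : 0 ≤ (t + 2 - s) * ((x + 1) ^ 2 - 8) := mul_nonneg (sub_nonneg.mpr hst) h8
  exact mul_pos (mul_pos (by norm_num) hu2) (add_pos_of_nonneg_of_pos hgap (by norm_num))

theorem largest_root_increases_general {s t u : ℝ} (hs : 1 ≤ s) (ht : 0 ≤ t) (hu : 0 ≤ u)
    (hst : s ≤ t + 2) :
    ∃ a b : ℝ,
      IsGreatest {x : ℝ | (x • (1 : Matrix (Fin 7) (Fin 7) ℝ) - Q1 (s - 1) (t + 1) u).det = 0} a ∧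
      IsGreatest {x : ℝ | (x • (1 : Matrix (Fin 7) (Fin 7) ℝ) - Q1 s t u).det = 0} b ∧
      b < a := by
  obtain ⟨μ, hμ, hμ_ge⟩ := exists_mem_spectrum_Q1_ge (zero_le_one.trans hs) ht hu
  obtain ⟨b, hb⟩ := (Q1 s t u).finite_spectrum.isCompact.exists_isGreatest ⟨μ, hμ⟩
  have hb_ge : s + t + u + 1 ≤ b := hμ_ge.trans (hb.2 hμ)
  rw [← setOf_det_smul_one_sub_eq_zero] at hb
  have hneg : (b • (1 : Matrix (Fin 7) (Fin 7) ℝ) - Q1 (s - 1) (t + 1) u).det < 0 :=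
    (det_smul_one_sub_Q1_shift_lt hst hu (by linarith)).trans_eq hb.1
  obtain ⟨ν, hν, hbν⟩ := exists_mem_spectrum_gt_of_det_neg hneg
  obtain ⟨a, ha⟩ := (Q1 (s - 1) (t + 1) u).finite_spectrum.isCompact.exists_isGreatest ⟨ν, hν⟩
  refine ⟨a, b, ?_, hb, hbν.trans_le (ha.2 hν)⟩
  rwa [setOf_det_smul_one_sub_eq_zero]

theorem largest_root_increases (k n s t : ℕ) (hk : 15 ≤ k) (hn : k + 20 ≤ n)
    (hst : s + t = k - 6) (hs1 : 1 ≤ s) (hs2 : s ≤ t + 2) :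
    ∃ a b : ℝ,
      IsGreatest {x : ℝ | (x • (1 : Matrix (Fin 7) (Fin 7) ℝ) -
        Q1 ((s : ℝ) - 1) ((t : ℝ) + 1) ((n : ℝ) - k + 1)).det = 0} a ∧
      IsGreatest {x : ℝ | (x • (1 : Matrix (Fin 7) (Fin 7) ℝ) -
        Q1 (s : ℝ) (t : ℝ) ((n : ℝ) - k + 1)).det = 0} b ∧
      b < a := by
  have hkn : (k : ℝ) ≤ n := by exact_mod_cast (Nat.le_add_right k 20).trans hn
  exact largest_root_increases_general (by exact_mod_cast hs1) t.cast_nonneg (by linarith)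
    (by exact_mod_cast hs2)
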